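/- (Extension of Markov's Theorem) For all l ≥ 0, m ≥ 0 and every real s < ζ_l, the limit lim_{n→∞} Q^{(m+l+1)}_{n−m−1}(s)/Q^{(l)}_n(s) exists and ∫_{[0,∞)} Q_m^{(l)}(x)/(x − s) ψ^{(l)}(dx) = (π_l/(λ_{m+l}π_{m+l})) · lim_{n→∞} Q^{(m+l+1)}_{n−m−1}(s)/Q^{(l)}_n(s). -/

import Mathlib

open Filter Topology ENNReal MeasureTheory

/-!
For a measure `ν` on `[z, ∞)`, the rescaled transform `(z - s) * ∫ f x / (x - s) ∂ν` tends to
`∫ f ∂ν` as `s → -∞`; conversely, if it converges and `f ≥ 0`, then `f` is integrable by Fatou's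
lemma. The moments of `ψ l` and the orthogonality of the `Q l m`, neither of which is given, are
read off from these asymptotics.

Let `F l` be the Stieltjes transform of `ψ l`. Dividing the recurrence satisfied by the associated
polynomials in the order `l` by `Q l n` and letting `n → ∞`, Markov's theorem gives the
continued-fraction relation between `F l` and `F (l + 1)`. Hence, in the birth-death case,
`F l * ∏ j < m, μ (l + j + 1) * F (l + j + 1)` satisfies in `m` the recurrence of the transform of
`Q l m`, and the two agree. Telescoping the ratios in Markov's theorem exhibits the product as the
limit of `Q (m + l + 1) (n - m - 1) s / Q l n s`, up to the factor `π l / (λ (m + l) * π (m + l))`.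
-/

section StieltjesTransform

variable {ν : Measure ℝ} {f : ℝ → ℝ} {z s : ℝ}

lemma integrable_div_sub (hf : Integrable f ν) (hz : ∀ᵐ x ∂ν, z ≤ x) (hs : s < z) :
    Integrable (fun x => f x / (x - s)) ν := by
  have hmeas : AEStronglyMeasurable (fun x => f x / (x - s)) ν := by
    simpa only [div_eq_mul_inv, Pi.mul_def] using hf.aestronglyMeasurable.mul
      (by fun_prop : Measurable fun x : ℝ => (x - s)⁻¹).aestronglyMeasurable
  refine (hf.norm.div_const (z - s)).mono' hmeas ?_
  filter_upwards [hz] with x hx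
  have : 0 < z - s := sub_pos.mpr hs
  rw [norm_div, Real.norm_of_nonneg (r := x - s) (by linarith)]
  gcongr

lemma ae_sub_mul_div_sub_eq (hz : ∀ᵐ x ∂ν, z ≤ x) (hs : s < z) (b : ℝ) :
    (fun x => (b - x) * f x / (x - s)) =ᵐ[ν] fun x => (b - s) * (f x / (x - s)) - f x := by
  filter_upwards [hz] with x hx
  have hxs : x - s ≠ 0 := by linarith
  field_simp
  ring

lemma integrable_sub_mul_div_sub (hf : Integrable f ν) (hz : ∀ᵐ x ∂ν, z ≤ x) (hs : s < z)
    (b : ℝ) : Integrable (fun x => (b - x) * f x / (x - s)) ν :=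
  (((integrable_div_sub hf hz hs).const_mul (b - s)).sub hf).congr
    (ae_sub_mul_div_sub_eq hz hs b).symm

lemma integral_sub_mul_div_sub (hf : Integrable f ν) (hz : ∀ᵐ x ∂ν, z ≤ x) (hs : s < z) (b : ℝ) :
    ∫ x, (b - x) * f x / (x - s) ∂ν = (b - s) * ∫ x, f x / (x - s) ∂ν - ∫ x, f x ∂ν := by
  rw [integral_congr_ae (ae_sub_mul_div_sub_eq hz hs b),
    integral_sub ((integrable_div_sub hf hz hs).const_mul _) hf, integral_const_mul]

lemma tendsto_const_sub_atBot (z : ℝ) : Tendsto (fun s => z - s) atBot atTop :=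
  tendsto_atTop_add_const_left _ z tendsto_neg_atBot_atTop

lemma tendsto_sub_div_sub_atBot (z x : ℝ) :
    Tendsto (fun s => (z - s) / (x - s)) atBot (𝓝 1) := by
  have h : Tendsto (fun s => 1 + (z - x) / (x - s)) atBot (𝓝 (1 + 0)) :=
    ((tendsto_const_sub_atBot x).const_div_atTop _).const_add 1
  rw [add_zero] at h
  refine h.congr' ?_
  filter_upwards [eventually_lt_atBot x] with s hs
  have hxs : x - s ≠ 0 := by linarith
  field_simp
  ring

lemma abs_sub_div_sub_le_one {x : ℝ} (hx : z ≤ x) (hs : s < z) : |(z - s) / (x - s)| ≤ 1 := by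
  rw [abs_of_nonneg (div_nonneg (by linarith) (by linarith))]
  exact div_le_one_of_le₀ (by linarith) (by linarith)

lemma tendsto_sub_mul_integral_div_sub (hf : Integrable f ν) (hz : ∀ᵐ x ∂ν, z ≤ x) :
    Tendsto (fun s => (z - s) * ∫ x, f x / (x - s) ∂ν) atBot (𝓝 (∫ x, f x ∂ν)) := by
  have hrw (s : ℝ) :
      (z - s) * ∫ x, f x / (x - s) ∂ν = ∫ x, f x * ((z - s) / (x - s)) ∂ν := by
    rw [← integral_const_mul]
    congr with x
    ring
  simp only [hrw]
  refine tendsto_integral_filter_of_dominated_convergence (fun x => ‖f x‖) ?_ ?_ hf.norm ?_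
  · exact .of_forall fun s => hf.aestronglyMeasurable.mul
      (by fun_prop : Measurable fun x : ℝ => (z - s) / (x - s)).aestronglyMeasurable
  · filter_upwards [eventually_lt_atBot z] with s hs
    filter_upwards [hz] with x hx
    rw [norm_mul]
    exact mul_le_of_le_one_right (norm_nonneg _) (abs_sub_div_sub_le_one hx hs)
  · exact .of_forall fun x => by simpa using (tendsto_sub_div_sub_atBot z x).const_mul (f x)

lemma tendsto_integral_div_sub_atBot (hf : Integrable f ν) (hz : ∀ᵐ x ∂ν, z ≤ x) :
    Tendsto (fun s => ∫ x, f x / (x - s) ∂ν) atBot (𝓝 0) := by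
  have h := (tendsto_sub_mul_integral_div_sub hf hz).mul
    (tendsto_const_sub_atBot z).inv_tendsto_atTop
  rw [mul_zero] at h
  refine h.congr' ?_
  filter_upwards [eventually_lt_atBot z] with s hs
  simp only [Pi.inv_apply]
  rw [mul_right_comm, mul_inv_cancel₀ (sub_pos.mpr hs).ne', one_mul]

/-- Fatou's lemma along `s = z - (k + 1) → -∞`. -/
lemma integrable_of_tendsto_sub_mul_integral_div_sub (hz : ∀ᵐ x ∂ν, z ≤ x)
    (hf0 : ∀ᵐ x ∂ν, 0 ≤ f x) (hint : ∀ s < z, Integrable (fun x => f x / (x - s)) ν) {c : ℝ}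
    (hc : Tendsto (fun s => (z - s) * ∫ x, f x / (x - s) ∂ν) atBot (𝓝 c)) :
    Integrable f ν := by
  set u : ℕ → ℝ := fun k => z - (k + 1)
  have hu_lt (k : ℕ) : u k < z := sub_lt_self z k.cast_add_one_pos
  have hu_lim : Tendsto u atTop atBot :=
    tendsto_atBot_add_const_left _ z (tendsto_neg_atTop_atBot.comp
      (tendsto_atTop_add_const_right _ 1 tendsto_natCast_atTop_atTop))
  set g : ℕ → ℝ → ℝ := fun k x => (z - u k) * (f x / (x - u k))
  have hg_int (k : ℕ) : Integrable (g k) ν := (hint _ (hu_lt k)).const_mul _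
  have hg_lim (x : ℝ) : Tendsto (fun k => g k x) atTop (𝓝 (f x)) := by
    have h := ((tendsto_sub_div_sub_atBot z x).comp hu_lim).const_mul (f x)
    rw [mul_one] at h
    exact h.congr fun k => mul_div_left_comm ..
  have hg_norm (k : ℕ) : ∫⁻ x, ‖g k x‖ₑ ∂ν = ENNReal.ofReal (∫ x, g k x ∂ν) := by
    rw [← ofReal_integral_norm_eq_lintegral_enorm (hg_int k)]
    congr 1
    refine integral_congr_ae ?_
    filter_upwards [hz, hf0] with x hx hfx
    have := hu_lt k
    exact Real.norm_of_nonneg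
      (mul_nonneg (by linarith) (div_nonneg hfx (by linarith)))
  refine integrable_of_tendsto (.of_forall hg_lim) (fun k => (hg_int k).aestronglyMeasurable) ?_
  have hlim : Tendsto (fun k => ∫⁻ x, ‖g k x‖ₑ ∂ν) atTop (𝓝 (ENNReal.ofReal c)) := by
    refine (ENNReal.tendsto_ofReal (hc.comp hu_lim)).congr fun k => ?_
    rw [hg_norm, integral_const_mul, Function.comp_apply]
  exact hlim.liminf_eq ▸ ENNReal.ofReal_ne_top

lemma integral_inv_sub_pos [IsFiniteMeasure ν] [NeZero ν] (hz : ∀ᵐ x ∂ν, z ≤ x) (hs : s < z) :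
    0 < ∫ x, (x - s)⁻¹ ∂ν := by
  have hpos : ∀ᵐ x ∂ν, 0 < (x - s)⁻¹ := hz.mono fun x hx => inv_pos.mpr (by linarith)
  have hint : Integrable (fun x => (x - s)⁻¹) ν := by
    simpa using integrable_div_sub (integrable_const (1 : ℝ)) hz hs
  have hnonneg : 0 ≤ᵐ[ν] fun x => (x - s)⁻¹ := hpos.mono fun x hx => hx.le
  refine (integral_nonneg_of_ae hnonneg).lt_of_ne fun h => ?_
  have hzero := (integral_eq_zero_iff_of_nonneg_ae hnonneg hint).mp h.symm
  obtain ⟨x, hx_pos, hx_zero⟩ := (hpos.and hzero).exists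
  exact hx_pos.ne' hx_zero

end StieltjesTransform

section Moments

open Polynomial

lemma natDegree_sub_C_coeff_mul_X_sub_C_pow_le {R : Type*} [CommRing R] {p : R[X]} {n : ℕ}
    (hp : p.natDegree ≤ n + 1) (z : R) :
    (p - C (p.coeff (n + 1)) * (X - C z) ^ (n + 1)).natDegree ≤ n := by
  nontriviality R
  have hdeg : ((X - C z) ^ (n + 1)).natDegree = n + 1 := by
    rw [(monic_X_sub_C z).natDegree_pow, natDegree_X_sub_C, mul_one]
  have hcoeff : ((X - C z) ^ (n + 1)).coeff (n + 1) = 1 := by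
    simpa only [hdeg] using ((monic_X_sub_C z).pow (n + 1)).coeff_natDegree
  refine natDegree_le_iff_coeff_eq_zero.mpr fun k hk => ?_
  rcases (Nat.succ_le_of_lt hk).eq_or_lt with rfl | hlt
  · simp [hcoeff]
  · rw [coeff_sub, coeff_C_mul, coeff_eq_zero_of_natDegree_lt (hp.trans_lt hlt),
      coeff_eq_zero_of_natDegree_lt (hdeg.trans_lt hlt), mul_zero, sub_zero]

variable {ν : Measure ℝ} {z : ℝ} {n : ℕ} {p : ℝ[X]} {c : ℝ}

/-- Modulo lower degrees, `p` is a multiple of `(x - z) ^ (n + 1)`, which is nonnegative on the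
support, so that Fatou's lemma applies. -/
lemma integrable_sub_pow_of_tendsto (hz : ∀ᵐ x ∂ν, z ≤ x)
    (hlow : ∀ r : ℝ[X], r.natDegree ≤ n → Integrable (fun x => r.eval x) ν)
    (hp : p.natDegree = n + 1)
    (hc : Tendsto (fun s => (z - s) * ∫ x, p.eval x / (x - s) ∂ν) atBot (𝓝 c)) :
    Integrable (fun x => (x - z) ^ (n + 1)) ν := by
  set a := p.coeff (n + 1) with ha
  have ha0 : a ≠ 0 := by
    rw [ha, ← hp, coeff_natDegree, leadingCoeff_ne_zero]
    exact ne_zero_of_natDegree_gt (n.succ_pos.trans_eq hp.symm)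
  set r : ℝ[X] := p - C a * (X - C z) ^ (n + 1) with hr
  have hr_int := hlow r (natDegree_sub_C_coeff_mul_X_sub_C_pow_le hp.le z)
  have hpow_int (s : ℝ) (hs : s < z) : Integrable (fun x => (x - z) ^ (n + 1) / (x - s)) ν := by
    have hn := hlow ((X - C z) ^ n)
      ((natDegree_pow_le_of_le n (natDegree_X_sub_C_le z)).trans_eq (mul_one n))
    refine (integrable_sub_mul_div_sub hn hz hs z).neg.congr (.of_forall fun x => ?_)
    simp only [Pi.neg_apply, eval_pow, eval_sub, eval_X, eval_C]
    ring
  refine integrable_of_tendsto_sub_mul_integral_div_sub hz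
    (hz.mono fun x hx => pow_nonneg (sub_nonneg.mpr hx) _) hpow_int
    (((hc.sub (tendsto_sub_mul_integral_div_sub hr_int hz)).const_mul a⁻¹).congr' ?_)
  filter_upwards [eventually_lt_atBot z] with s hs
  have hsplit : ∫ x, p.eval x / (x - s) ∂ν
      = a * ∫ x, (x - z) ^ (n + 1) / (x - s) ∂ν + ∫ x, r.eval x / (x - s) ∂ν := by
    rw [← integral_const_mul,
      ← integral_add ((hpow_int s hs).const_mul a) (integrable_div_sub hr_int hz hs)]
    congr with x
    simp only [hr, eval_sub, eval_mul, eval_C, eval_pow, eval_X]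
    ring
  rw [hsplit]
  field_simp
  ring

lemma integrable_polynomial_of_tendsto (hz : ∀ᵐ x ∂ν, z ≤ x)
    (hlow : ∀ r : ℝ[X], r.natDegree ≤ n → Integrable (fun x => r.eval x) ν)
    (hp : p.natDegree = n + 1)
    (hc : Tendsto (fun s => (z - s) * ∫ x, p.eval x / (x - s) ∂ν) atBot (𝓝 c))
    {r : ℝ[X]} (hr : r.natDegree ≤ n + 1) : Integrable (fun x => r.eval x) ν := by
  have hpow := integrable_sub_pow_of_tendsto hz hlow hp hc
  refine ((hlow _ (natDegree_sub_C_coeff_mul_X_sub_C_pow_le hr z)).add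
    (hpow.const_mul (r.coeff (n + 1)))).congr (.of_forall fun x => ?_)
  simp

end Moments

/-- The polynomials `Q l n` associated with the three-term recurrence
`a n * q (n + 1) = (b n - x) * q n - d n * q (n - 1)`: the polynomial `Q l n`, encoded as a function
`ℝ → ℝ`, has degree `n` and order `l`, that is, its recurrence has all coefficients shifted by `l`.
Birth rates `a`, death rates `d` and `b = a + d` give the associated birth-death polynomials. -/
structure IsAssociatedPolynomials (a b d : ℕ → ℝ) (Q : ℕ → ℕ → ℝ → ℝ) : Prop where
  zero : ∀ l x, Q l 0 x = 1
  one : ∀ l x, a l * Q l 1 x = b l - x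
  add_two : ∀ l n x, a (n + 1 + l) * Q l (n + 2) x
    = (b (n + 1 + l) - x) * Q l (n + 1) x - d (n + 1 + l) * Q l n x

namespace IsAssociatedPolynomials

variable {a b d : ℕ → ℝ} {Q : ℕ → ℕ → ℝ → ℝ}

section Polynomial

open Polynomial

lemma exists_natDegree_eq (hQ : IsAssociatedPolynomials a b d Q) (ha : ∀ n, a n ≠ 0) (l n : ℕ) :
    ∃ p : ℝ[X], p.natDegree = n ∧ ∀ x, Q l n x = p.eval x := by
  have hlin (β : ℝ) : (C β - X).natDegree = 1 := by
    rw [natDegree_sub_eq_right_of_natDegree_lt (by simp), natDegree_X]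
  induction n using Nat.twoStepInduction with
  | zero => exact ⟨1, natDegree_one, by simp [hQ.zero]⟩
  | one =>
    refine ⟨C (a l)⁻¹ * (C (b l) - X), ?_, fun x => ?_⟩
    · rw [natDegree_C_mul (inv_ne_zero (ha l)), hlin]
    · simp [← hQ.one, ha l]
  | more n ih ih' =>
    obtain ⟨p, hp, hQp⟩ := ih
    obtain ⟨p', hp', hQp'⟩ := ih'
    have hp'0 : p' ≠ 0 := ne_zero_of_natDegree_gt (n.succ_pos.trans_eq hp'.symm)
    have hmul : ((C (b (n + 1 + l)) - X) * p').natDegree = n + 2 := by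
      rw [natDegree_mul (ne_zero_of_natDegree_gt (hlin _ ▸ one_pos)) hp'0, hlin, hp']
      omega
    refine ⟨C (a (n + 1 + l))⁻¹ * ((C (b (n + 1 + l)) - X) * p' - C (d (n + 1 + l)) * p),
      ?_, fun x => ?_⟩
    · rw [natDegree_C_mul (inv_ne_zero (ha _)), natDegree_sub_eq_left_of_natDegree_lt, hmul]
      rw [hmul]
      exact (natDegree_C_mul_le _ _).trans_lt (by omega)
    · simp [← hQp, ← hQp', ← hQ.add_two, ha (n + 1 + l)]

lemma integrable (hQ : IsAssociatedPolynomials a b d Q) (ha : ∀ n, a n ≠ 0) {ν : Measure ℝ}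
    {n : ℕ} (hint : ∀ r : ℝ[X], r.natDegree ≤ n → Integrable (fun x => r.eval x) ν) (l : ℕ) :
    Integrable (Q l n) ν := by
  obtain ⟨p, hp, hQp⟩ := hQ.exists_natDegree_eq ha l n
  exact (hint p hp.le).congr (.of_forall fun x => (hQp x).symm)

lemma integrable_polynomial_succ (hQ : IsAssociatedPolynomials a b d Q) (ha : ∀ n, a n ≠ 0)
    {ν : Measure ℝ} {z c : ℝ} (hz : ∀ᵐ x ∂ν, z ≤ x) {l n : ℕ}
    (hlow : ∀ r : ℝ[X], r.natDegree ≤ n → Integrable (fun x => r.eval x) ν)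
    (hc : Tendsto (fun s => (z - s) * ∫ x, Q l (n + 1) x / (x - s) ∂ν) atBot (𝓝 c))
    (r : ℝ[X]) (hr : r.natDegree ≤ n + 1) : Integrable (fun x => r.eval x) ν := by
  obtain ⟨p, hp, hQp⟩ := hQ.exists_natDegree_eq ha l (n + 1)
  exact integrable_polynomial_of_tendsto hz hlow hp (by simpa only [hQp] using hc) hr

end Polynomial

section FunctionsOfSecondKind

variable {ν : Measure ℝ} {z s : ℝ} {l : ℕ}

lemma integral_one_div_sub [IsProbabilityMeasure ν] (hQ : IsAssociatedPolynomials a b d Q)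
    (hz : ∀ᵐ x ∂ν, z ≤ x) (hs : s < z) :
    a l * ∫ x, Q l 1 x / (x - s) ∂ν = (b l - s) * ∫ x, (x - s)⁻¹ ∂ν - 1 := by
  have h := integral_sub_mul_div_sub (integrable_const (1 : ℝ)) hz hs (b l)
  simp only [mul_one, one_div, integral_const, probReal_univ, smul_eq_mul] at h
  rw [← h, ← integral_const_mul]
  simp only [← mul_div_assoc, hQ.one]

lemma integral_add_two_div_sub (hQ : IsAssociatedPolynomials a b d Q) (hz : ∀ᵐ x ∂ν, z ≤ x)
    (hs : s < z) {n : ℕ} (hn : Integrable (Q l n) ν) (hn' : Integrable (Q l (n + 1)) ν) :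
    a (n + 1 + l) * ∫ x, Q l (n + 2) x / (x - s) ∂ν
      = (b (n + 1 + l) - s) * ∫ x, Q l (n + 1) x / (x - s) ∂ν
        - d (n + 1 + l) * ∫ x, Q l n x / (x - s) ∂ν - ∫ x, Q l (n + 1) x ∂ν := by
  calc a (n + 1 + l) * ∫ x, Q l (n + 2) x / (x - s) ∂ν
      = ∫ x, ((b (n + 1 + l) - x) * Q l (n + 1) x / (x - s)
          - d (n + 1 + l) * (Q l n x / (x - s))) ∂ν := by
        rw [← integral_const_mul]
        congr with x
        rw [← mul_div_assoc, hQ.add_two]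
        ring
    _ = ∫ x, (b (n + 1 + l) - x) * Q l (n + 1) x / (x - s) ∂ν
          - d (n + 1 + l) * ∫ x, Q l n x / (x - s) ∂ν := by
        rw [integral_sub (integrable_sub_mul_div_sub hn' hz hs _)
          ((integrable_div_sub hn hz hs).const_mul _), integral_const_mul]
    _ = _ := by
        rw [integral_sub_mul_div_sub hn' hz hs]
        ring

open Polynomial in
/-- The decay of `S (n + 1)` yields both the next moment and the orthogonality of `Q l (n + 1)` to
constants; the latter makes the transform of `Q l (n + 2)` obey the recurrence of `S`. -/
theorem integral_div_sub_eq [IsProbabilityMeasure ν] (hQ : IsAssociatedPolynomials a b d Q)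
    (ha : ∀ n, a n ≠ 0) (hz : ∀ᵐ x ∂ν, z ≤ x) {S : ℕ → ℝ → ℝ}
    (hS0 : ∀ s < z, S 0 s = ∫ x, (x - s)⁻¹ ∂ν)
    (hS1 : ∀ s < z, a l * S 1 s = (b l - s) * S 0 s - 1)
    (hS : ∀ n, ∀ s < z, a (n + 1 + l) * S (n + 2) s
      = (b (n + 1 + l) - s) * S (n + 1) s - d (n + 1 + l) * S n s)
    (hSlim : ∀ n, Tendsto (fun s => (z - s) * S (n + 1) s) atBot (𝓝 0)) (n : ℕ) (hs : s < z) :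
    ∫ x, Q l n x / (x - s) ∂ν = S n s := by
  have hlim {n : ℕ} (hval : ∀ s < z, ∫ x, Q l (n + 1) x / (x - s) ∂ν = S (n + 1) s) :
      Tendsto (fun s => (z - s) * ∫ x, Q l (n + 1) x / (x - s) ∂ν) atBot (𝓝 0) := by
    refine (hSlim n).congr' ?_
    filter_upwards [eventually_lt_atBot z] with s hs
    rw [hval s hs]
  suffices key : (∀ r : ℝ[X], r.natDegree ≤ n → Integrable (fun x => r.eval x) ν) ∧
      ∀ s < z, ∫ x, Q l n x / (x - s) ∂ν = S n s from key.2 s hs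
  have hzero (r : ℝ[X]) (hr : r.natDegree ≤ 0) : Integrable (fun x => r.eval x) ν := by
    rw [eq_C_of_natDegree_le_zero hr]
    simp
  have hone (s : ℝ) (hs : s < z) : ∫ x, Q l 1 x / (x - s) ∂ν = S 1 s := by
    refine mul_left_cancel₀ (ha l) ?_
    rw [hQ.integral_one_div_sub hz hs, hS1 s hs, hS0 s hs]
  induction n using Nat.twoStepInduction with
  | zero => exact ⟨hzero, fun s hs => by simp [hQ.zero, hS0 s hs]⟩
  | one => exact ⟨hQ.integrable_polynomial_succ ha hz hzero (hlim hone), hone⟩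
  | more n ih ih' =>
    obtain ⟨hlow, hval⟩ := ih
    obtain ⟨hlow', hval'⟩ := ih'
    have hint := hQ.integrable ha hlow l
    have hint' := hQ.integrable ha hlow' l
    have horth : ∫ x, Q l (n + 1) x ∂ν = 0 :=
      tendsto_nhds_unique (tendsto_sub_mul_integral_div_sub hint' hz) (hlim hval')
    have hnew (s : ℝ) (hs : s < z) : ∫ x, Q l (n + 2) x / (x - s) ∂ν = S (n + 2) s := by
      refine mul_left_cancel₀ (ha (n + 1 + l)) ?_
      rw [hQ.integral_add_two_div_sub hz hs hint hint', horth, hval s hs, hval' s hs, hS n s hs,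
        sub_zero]
    exact ⟨hQ.integrable_polynomial_succ ha hz hlow' (hlim hnew), hnew⟩

theorem integral_div_sub_eq_prod [IsProbabilityMeasure ν] (hQ : IsAssociatedPolynomials a b d Q)
    (ha : ∀ n, a n ≠ 0) (hz : ∀ᵐ x ∂ν, z ≤ x) {F : ℕ → ℝ → ℝ}
    (hF0 : ∀ s, F 0 s = ∫ x, (x - s)⁻¹ ∂ν)
    (hF : ∀ n, ∀ s < z, (b (n + l) - s - a (n + l) * d (n + 1 + l) * F (n + 1) s) * F n s = 1)
    (hFlim : ∀ n, Tendsto (F (n + 1)) atBot (𝓝 0)) (n : ℕ) (hs : s < z) :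
    ∫ x, Q l n x / (x - s) ∂ν = F 0 s * ∏ j ∈ Finset.range n, d (j + 1 + l) * F (j + 1) s := by
  refine hQ.integral_div_sub_eq ha hz
    (S := fun n s => F 0 s * ∏ j ∈ Finset.range n, d (j + 1 + l) * F (j + 1) s)
    (fun s _ => by simp [hF0]) (fun s hs => ?_) (fun n s hs => ?_) (fun n => ?_) n hs
  · have hcf := hF 0 s hs
    simp only [zero_add] at hcf
    simp only [Finset.prod_range_one, Finset.prod_range_zero, zero_add]
    linear_combination -hcf
  · simp only [Finset.prod_range_succ]
    linear_combination (-F 0 s * (∏ j ∈ Finset.range n, d (j + 1 + l) * F (j + 1) s)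
      * d (n + 1 + l)) * hF (n + 1) s hs
  · have hF0lim : Tendsto (fun s => (z - s) * F 0 s) atBot (𝓝 1) := by
      simpa [hF0] using tendsto_sub_mul_integral_div_sub (integrable_const (μ := ν) (1 : ℝ)) hz
    simpa [mul_assoc] using hF0lim.mul
      (tendsto_finsetProd (Finset.range (n + 1)) fun j _ => (hFlim j).const_mul (d (j + 1 + l)))

end FunctionsOfSecondKind

section Order

variable {l : ℕ} {x F G : ℝ}

theorem order_recurrence (hQ : IsAssociatedPolynomials a b d Q) (ha : ∀ n, a n ≠ 0)
    (l n : ℕ) (x : ℝ) :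
    a l * a (l + 1) * Q l (n + 2) x
      = a (l + 1) * (b l - x) * Q (l + 1) (n + 1) x - a l * d (l + 1) * Q (l + 2) n x := by
  have hzero : a l * a (l + 1) * Q l 2 x
      = a (l + 1) * (b l - x) * Q (l + 1) 1 x - a l * d (l + 1) := by
    have h2 := hQ.add_two l 0 x
    simp only [zero_add, add_comm 1 l, hQ.zero] at h2
    linear_combination a l * h2 + (b (l + 1) - x) * hQ.one l x - (b l - x) * hQ.one (l + 1) x
  induction n using Nat.twoStepInduction with
  | zero => simpa [hQ.zero] using hzero
  | one =>
    have h3 := hQ.add_two l 1 x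
    have h2 := hQ.add_two (l + 1) 0 x
    simp only [show 1 + 1 + l = l + 2 by ring, show 0 + 1 + (l + 1) = l + 2 by ring, hQ.zero]
      at h3 h2
    refine mul_left_cancel₀ (ha (l + 2)) ?_
    linear_combination a l * a (l + 1) * h3 - a (l + 1) * (b l - x) * h2
      + a l * d (l + 1) * hQ.one (l + 2) x + (b (l + 2) - x) * hzero
      - a (l + 1) * d (l + 2) * hQ.one l x
  | more n ih ih' =>
    have h4 := hQ.add_two l (n + 2) x
    have h3 := hQ.add_two (l + 1) (n + 1) x
    have h2 := hQ.add_two (l + 2) n x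
    rw [show n + 1 + 1 + (l + 1) = n + 2 + 1 + l by ring] at h3
    rw [show n + 1 + (l + 2) = n + 2 + 1 + l by ring] at h2
    refine mul_left_cancel₀ (ha (n + 2 + 1 + l)) ?_
    linear_combination a l * a (l + 1) * h4 - a (l + 1) * (b l - x) * h3
      + a l * d (l + 1) * h2 + (b (n + 2 + 1 + l) - x) * ih' - d (n + 2 + 1 + l) * ih

theorem continuedFraction_of_tendsto (hQ : IsAssociatedPolynomials a b d Q) (ha : ∀ n, a n ≠ 0)
    (hF0 : F ≠ 0)
    (hF : Tendsto (fun n => Q (l + 1) (n - 1) x / Q l n x) atTop (𝓝 (a l * F)))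
    (hG : Tendsto (fun n => Q (l + 2) (n - 1) x / Q (l + 1) n x) atTop (𝓝 (a (l + 1) * G))) :
    (b l - x - a l * d (l + 1) * G) * F = 1 := by
  have hF' := hF.comp (tendsto_add_atTop_nat 2)
  have hG' := hG.comp (tendsto_add_atTop_nat 1)
  have hlim := (hF'.const_mul (a (l + 1) * (b l - x))).sub
    ((hG'.mul hF').const_mul (a l * d (l + 1)))
  have hconst : a l * a (l + 1)
      = a (l + 1) * (b l - x) * (a l * F) - a l * d (l + 1) * (a (l + 1) * G * (a l * F)) := by
    refine tendsto_nhds_unique (tendsto_const_nhds.congr' ?_) hlim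
    filter_upwards [hF'.eventually_ne (mul_ne_zero (ha l) hF0)] with n hn
    obtain ⟨hnum, hden⟩ := div_ne_zero_iff.mp hn
    simp only [Function.comp_apply, Nat.add_one_sub_one] at hnum hden ⊢
    rw [div_mul_div_cancel₀ hnum, mul_div_assoc', mul_div_assoc', ← sub_div,
      ← hQ.order_recurrence ha, mul_div_cancel_right₀ _ hden]
  refine mul_left_cancel₀ (mul_ne_zero (ha l) (ha (l + 1))) ?_
  linear_combination -hconst

end Order

end IsAssociatedPolynomials

lemma tendsto_div_prod_of_tendsto_div {r : ℕ → ℕ → ℝ} {L : ℕ → ℝ} (hL : ∀ k, L k ≠ 0)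
    (hr : ∀ k, Tendsto (fun n => r (k + 1) (n - 1) / r k n) atTop (𝓝 (L k))) (m : ℕ) :
    Tendsto (fun n => r (m + 1) (n - m - 1) / r 0 n) atTop
      (𝓝 (∏ j ∈ Finset.range (m + 1), L j)) := by
  induction m with
  | zero => simpa using hr 0
  | succ m ih =>
    have hnext : Tendsto (fun n => r (m + 2) (n - (m + 1) - 1) / r (m + 1) (n - (m + 1))) atTop
        (𝓝 (L (m + 1))) := (hr (m + 1)).comp (tendsto_sub_atTop_nat (m + 1))
    rw [Finset.prod_range_succ, mul_comm]
    refine (hnext.mul ih).congr' ?_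
    filter_upwards [hnext.eventually_ne (hL (m + 1))] with n hn
    exact div_mul_div_cancel₀ (div_ne_zero_iff.mp hn).2

lemma mul_prod_range_eq_div_mul_prod {K : Type*} [Field K] {a d p : ℕ → K} (ha : ∀ n, a n ≠ 0)
    (hd : ∀ n, d (n + 1) ≠ 0) (hp0 : p 0 ≠ 0) (hp : ∀ n, p (n + 1) = p n * a n / d (n + 1))
    (F : ℕ → K) (l m : ℕ) :
    F 0 * ∏ j ∈ Finset.range m, d (j + 1 + l) * F (j + 1)
      = p l / (a (m + l) * p (m + l)) * ∏ j ∈ Finset.range (m + 1), a (j + l) * F j := by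
  have hp_ne (n : ℕ) : p n ≠ 0 := by
    induction n with
    | zero => exact hp0
    | succ n ih => exact hp n ▸ div_ne_zero (mul_ne_zero ih (ha n)) (hd n)
  induction m with
  | zero =>
    have hal := ha l
    have hpl := hp_ne l
    simp only [Finset.prod_range_zero, Finset.prod_range_one, zero_add]
    field_simp
  | succ m ih =>
    have ham := ha (m + l)
    have ham' := ha (m + l + 1)
    have hdm := hd (m + l)
    have hpm := hp_ne (m + l)
    rw [Finset.prod_range_succ, ← mul_assoc, ih, Finset.prod_range_succ _ (m + 1),
      add_right_comm m 1 l, hp]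
    field_simp

theorem stmt19_general {a b d p : ℕ → ℝ} (ha : ∀ n, a n ≠ 0) (hd : ∀ n, d (n + 1) ≠ 0)
    (hp0 : p 0 = 1) (hp : ∀ n, p (n + 1) = p n * a n / d (n + 1))
    {Q : ℕ → ℕ → ℝ → ℝ} (hQ : IsAssociatedPolynomials a b d Q)
    {ψ : ℕ → Measure ℝ} [∀ l, IsProbabilityMeasure (ψ l)]
    {ζ : ℕ → ℝ} (hζmono : Monotone ζ) (hζ : ∀ l, ∀ᵐ x ∂ψ l, ζ l ≤ x)
    (hMarkov : ∀ l, ∀ s < ζ l,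
      Tendsto (fun n => 1 / a l * (Q (l + 1) (n - 1) s / Q l n s)) atTop
        (𝓝 (∫ x, (x - s)⁻¹ ∂ψ l)))
    (l m : ℕ) {s : ℝ} (hs : s < ζ l) :
    ∃ L : ℝ, Tendsto (fun n => Q (m + l + 1) (n - m - 1) s / Q l n s) atTop (𝓝 L) ∧
      ∫ x, Q l m x / (x - s) ∂ψ l = p l / (a (m + l) * p (m + l)) * L := by
  set F : ℕ → ℝ → ℝ := fun k t => ∫ x, (x - t)⁻¹ ∂ψ (k + l) with hF
  have hlt (k : ℕ) {t : ℝ} (ht : t < ζ l) : t < ζ (k + l) := ht.trans_le (hζmono (by omega))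
  have hF_ne (k : ℕ) (t : ℝ) (ht : t < ζ l) : F k t ≠ 0 :=
    (integral_inv_sub_pos (hζ _) (hlt k ht)).ne'
  have hF_lim (k : ℕ) : Tendsto (F k) atBot (𝓝 0) := by
    simpa [hF] using tendsto_integral_div_sub_atBot (integrable_const (1 : ℝ)) (hζ (k + l))
  have hratio (k : ℕ) (t : ℝ) (ht : t < ζ l) :
      Tendsto (fun n => Q (k + 1 + l) (n - 1) t / Q (k + l) n t) atTop (𝓝 (a (k + l) * F k t)) := by
    rw [add_right_comm]
    refine ((hMarkov _ t (hlt k ht)).const_mul (a (k + l))).congr fun n => ?_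
    rw [one_div, mul_inv_cancel_left₀ (ha _)]
  have hcf (k : ℕ) (t : ℝ) (ht : t < ζ l) :
      (b (k + l) - t - a (k + l) * d (k + 1 + l) * F (k + 1) t) * F k t = 1 := by
    have h := hratio k t ht
    have h' := hratio (k + 1) t ht
    simp only [add_right_comm _ _ l] at h h' ⊢
    exact hQ.continuedFraction_of_tendsto ha (hF_ne k t ht) h h'
  refine ⟨∏ j ∈ Finset.range (m + 1), a (j + l) * F j s, ?_, ?_⟩
  · simpa [add_right_comm m 1 l] using
      tendsto_div_prod_of_tendsto_div (r := fun k n => Q (k + l) n s)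
        (fun k => mul_ne_zero (ha _) (hF_ne k s hs)) (fun k => hratio k s hs) m
  · rw [hQ.integral_div_sub_eq_prod ha (hζ l) (F := F) (fun t => by simp [hF]) hcf
      (fun k => hF_lim (k + 1)) m hs]
    exact mul_prod_range_eq_div_mul_prod ha hd (hp0 ▸ one_ne_zero) hp (F · s) l m

theorem stmt19
    (lam mu : ℕ → ℝ) (pi : ℕ → ℝ)
    (hlam : ∀ n, 0 < lam n) (hmu0 : 0 ≤ mu 0) (hmu : ∀ n, 1 ≤ n → 0 < mu n)
    (hpi0 : pi 0 = 1) (hpi : ∀ n, pi (n + 1) = pi n * lam n / mu (n + 1))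
    (Q : ℕ → ℕ → ℝ → ℝ)
    (hQ0 : ∀ l x, Q l 0 x = 1)
    (hQ1 : ∀ l x, lam l * Q l 1 x = lam l + mu l - x)
    (hQrec : ∀ l n x, lam (n + 1 + l) * Q l (n + 2) x
      = (lam (n + 1 + l) + mu (n + 1 + l) - x) * Q l (n + 1) x - mu (n + 1 + l) * Q l n x)
    (ψ : ℕ → Measure ℝ) (hprob : ∀ l, IsProbabilityMeasure (ψ l))
    (hsupp : ∀ l, ψ l (Set.Iio 0) = 0)
    (ζ : ℕ → ℝ) (hζ0 : ∀ l, 0 ≤ ζ l) (hζmono : Monotone ζ)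
    (hζ : ∀ l, IsGreatest {t : ℝ | ψ l (Set.Iio t) = 0} (ζ l))
    (hMarkov : ∀ l, ∀ s : ℝ, s < ζ l →
      Tendsto (fun n => (1 / lam l) * (Q (l + 1) (n - 1) s / Q l n s)) atTop
        (nhds (∫ x, (x - s)⁻¹ ∂ψ l)))
    (hCF : ∀ l, ∀ s : ℝ, s < ζ l →
      ∫ x, (x - s)⁻¹ ∂ψ l =
        (lam l + mu l - s - lam l * mu (l + 1) * ∫ x, (x - s)⁻¹ ∂ψ (l + 1))⁻¹) :
    ∀ l m, ∀ s : ℝ, s < ζ l →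
      ∃ Lim : ℝ,
        Tendsto (fun n => Q (m + l + 1) (n - m - 1) s / Q l n s) atTop (nhds Lim) ∧
          ∫ x, Q l m x / (x - s) ∂ψ l = pi l / (lam (m + l) * pi (m + l)) * Lim := by
  exact fun l m s => stmt19_general (b := lam + mu) (fun n => (hlam n).ne')
    (fun n => (hmu _ n.succ_pos).ne') hpi0 hpi ⟨hQ0, hQ1, hQrec⟩ hζmono
    (fun l => by simpa [ae_iff, Set.Iio_def] using (hζ l).1) hMarkov l m
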